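/- Fix n ≥ 2 and N ∈ ℕ, and let W^{(N)} = span{h_{m₁} ⊗ ⋯ ⊗ h_{m_n} : m₁ + ⋯ + m_n = N} ⊆ H₁ ⊗ ⋯ ⊗ H_n. For 0 ≤ j ≤ N let U^{(j,N)} = span{(Δ^{(n)}a⁺)^{N−j} O₁^{j₁} O₂^{j₂} ⋯ O_{n−1}^{j_{n−1}} v₀ : j_i ∈ ℕ, j₁ + ⋯ + j_{n−1} = j}. Then W^{(N)} is the internal direct sum ⊕_{j=0}^{N} U^{(j,N)}; moreover every vector of U^{(j,N)} is an eigenvector of Δ^{(n)}ε with eigenvalue c₁ + ⋯ + c_n + N and an eigenvector of the Casimir Δ^{(n)}C_q = [γ₁+⋯+γ_n]_q · Δ^{(n)}ε − Δ^{(n)}a⁺ ∘ Δ^{(n)}a⁻ with eigenvalue [γ₁+⋯+γ_n]_q · (c₁ + ⋯ + c_n + j). -/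

import Mathlib

/-! Write `C i` for the elementary creation operators (`create`) and `B i` for the annihilation
operators (`annih`). They satisfy `[B i, C j] = δᵢⱼ` and `[C i, C j] = 0`; the raising
operator is `ℓ = Σ Aᵢ C i`, the lowering operator is
`D = Σ Aᵢ B i`, and each `O_k` is a combination of `C k` and `C (k+1)`, where `Aᵢ > 0`
(`wt`). So `ℓ` and all `O_k` commute and raise the total degree by one.
The coefficients are such that `[D, O_k] = 0` (`lower_mul_ON`), and a telescoping sum gives
`[D, ℓ] = Σ Aᵢ² = [Σ γᵢ]_q` (`sum_wt_sq`, `lower_mul_raise`).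

Since `D v₀ = 0`, the operator `ℓ D` acts on `ℓ^{N-j} O^{jv} v₀` as `[Σ γᵢ]_q (N - j)`, which
yields the Casimir eigenvalue. As `[Σ γᵢ]_q ≠ 0`, these eigenvalues are distinct for distinct `j`,
so the `U j` are independent. They span because `ℓ, O_1, …, O_{n-1}` span the same space of
operators as the `C i` (`create_mem_span`): modulo the `O_k` every `C i` is a positive multiple of
`C 0`, so `ℓ` is too, which recovers `C 0` and then every `C i`. Hence the
degree `N + 1` space, being generated by the images under the
`C i` of the degree `N` space, is generated by the images under `ℓ` and the `O_k`
(`degSpace_le`). -/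

noncomputable section
noncomputable section

/-- The `q`-number `[γ]_q = (q^γ - q^(-γ))/(q - q⁻¹)`. -/
def qnum (q γ : ℝ) : ℝ := (q ^ γ - q ^ (-γ)) / (q - q⁻¹)

/-- The representation space `H^{(γ,c)}`: finitely supported functions `ℕ → ℂ`. -/
abbrev HO : Type := ℕ →₀ ℂ

/-- The basis vector `h_m`. -/
def hv (m : ℕ) : HO := Finsupp.single m 1

/-- The lowering operator `a⁻ h_m = [γ]_q^{1/2} m^{1/2} h_{m-1}` (so `a⁻ h_0 = 0`). -/
def aMinus (q γ : ℝ) : HO →ₗ[ℂ] HO :=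
  Finsupp.lift HO ℂ ℕ fun m => ((Real.sqrt (qnum q γ) * Real.sqrt m : ℝ) : ℂ) • hv (m - 1)

/-- The raising operator `a⁺ h_m = [γ]_q^{1/2} (m+1)^{1/2} h_{m+1}`. -/
def aPlus (q γ : ℝ) : HO →ₗ[ℂ] HO :=
  Finsupp.lift HO ℂ ℕ fun m => ((Real.sqrt (qnum q γ) * Real.sqrt (m + 1) : ℝ) : ℂ) • hv (m + 1)

/-- The operator `ε h_m = (m + c) h_m`. -/
def epsOp (c : ℝ) : HO →ₗ[ℂ] HO :=
  Finsupp.lift HO ℂ ℕ fun m => (((m : ℝ) + c : ℝ) : ℂ) • hv m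

/-- The model of the `n`-fold tensor power `H^{(γ₁,c₁)} ⊗ ⋯ ⊗ H^{(γ_n,c_n)}`: finitely
supported functions on multi-indices, with `h_{m₁} ⊗ ⋯ ⊗ h_{m_n}` the standard basis. -/
abbrev HN (n : ℕ) : Type := (Fin n → ℕ) →₀ ℂ

/-- The basis vector `h_{m₁} ⊗ ⋯ ⊗ h_{m_n}`. -/
def hN {n : ℕ} (m : Fin n → ℕ) : HN n := Finsupp.single m 1

/-- The iterated coproduct action of `a⁺`:
`Δ^{(n)}a⁺ = Σᵢ q^{−(γ₁+⋯+γ_{i−1})/2} q^{(γ_{i+1}+⋯+γ_n)/2} (1^{⊗ i−1} ⊗ a⁺ ⊗ 1^{⊗ n−i})`. -/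
def ΔNaPlus (q : ℝ) {n : ℕ} (γ : Fin n → ℝ) : HN n →ₗ[ℂ] HN n :=
  Finsupp.lift (HN n) ℂ (Fin n → ℕ) fun m =>
    ∑ i : Fin n,
      ((q ^ (-(∑ j ∈ Finset.Iio i, γ j) / 2) * q ^ ((∑ j ∈ Finset.Ioi i, γ j) / 2) *
          (Real.sqrt (qnum q (γ i)) * Real.sqrt (m i + 1)) : ℝ) : ℂ) •
        hN (Function.update m i (m i + 1))

/-- The iterated coproduct action of `a⁻`:
`Δ^{(n)}a⁻ = Σᵢ q^{−(γ₁+⋯+γ_{i−1})/2} q^{(γ_{i+1}+⋯+γ_n)/2} (1^{⊗ i−1} ⊗ a⁻ ⊗ 1^{⊗ n−i})`. -/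
def ΔNaMinus (q : ℝ) {n : ℕ} (γ : Fin n → ℝ) : HN n →ₗ[ℂ] HN n :=
  Finsupp.lift (HN n) ℂ (Fin n → ℕ) fun m =>
    ∑ i : Fin n,
      ((q ^ (-(∑ j ∈ Finset.Iio i, γ j) / 2) * q ^ ((∑ j ∈ Finset.Ioi i, γ j) / 2) *
          (Real.sqrt (qnum q (γ i)) * Real.sqrt (m i)) : ℝ) : ℂ) •
        hN (Function.update m i (m i - 1))

/-- The iterated coproduct action of `ε`: `Δ^{(n)}ε = Σᵢ 1^{⊗ i−1} ⊗ ε ⊗ 1^{⊗ n−i}`. -/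
def ΔNeps {n : ℕ} (c : Fin n → ℝ) : HN n →ₗ[ℂ] HN n :=
  Finsupp.lift (HN n) ℂ (Fin n → ℕ) fun m =>
    ((∑ i : Fin n, ((m i : ℝ) + c i) : ℝ) : ℂ) • hN m

/-- The `k`-th tensor slot, for `k = 1, …, n−1` (0-indexed). -/
def pos1 {n : ℕ} (k : Fin (n - 1)) : Fin n := ⟨k.1, by have := k.isLt; omega⟩

/-- The `(k+1)`-st tensor slot, for `k = 1, …, n−1` (0-indexed). -/
def pos2 {n : ℕ} (k : Fin (n - 1)) : Fin n := ⟨k.1 + 1, by have := k.isLt; omega⟩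

/-- The ladder operator `O_k = 1^{⊗ k−1} ⊗ O_{(γ_k,γ_{k+1})} ⊗ 1^{⊗ n−k−1}`, where
`O_{(γ,γ')} = q^{−γ/2}[γ]_q^{−1/2}[γ']_q^{1/2}(a⁺ ⊗ 1) − q^{γ'/2}[γ]_q^{1/2}[γ']_q^{−1/2}(1 ⊗ a⁺)`. -/
def ON (q : ℝ) {n : ℕ} (γ : Fin n → ℝ) (k : Fin (n - 1)) : HN n →ₗ[ℂ] HN n :=
  Finsupp.lift (HN n) ℂ (Fin n → ℕ) fun m =>
    ((q ^ (-(γ (pos1 k)) / 2) * (Real.sqrt (qnum q (γ (pos1 k))))⁻¹ *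
        Real.sqrt (qnum q (γ (pos2 k))) *
        (Real.sqrt (qnum q (γ (pos1 k))) * Real.sqrt (m (pos1 k) + 1)) : ℝ) : ℂ) •
        hN (Function.update m (pos1 k) (m (pos1 k) + 1)) -
      ((q ^ (γ (pos2 k) / 2) * Real.sqrt (qnum q (γ (pos1 k))) *
        (Real.sqrt (qnum q (γ (pos2 k))))⁻¹ *
        (Real.sqrt (qnum q (γ (pos2 k))) * Real.sqrt (m (pos2 k) + 1)) : ℝ) : ℂ) •
        hN (Function.update m (pos2 k) (m (pos2 k) + 1))

/-- The monomial `O₁^{j₁} O₂^{j₂} ⋯ O_{n−1}^{j_{n−1}}` (a product of commuting operators). -/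
def Omono (q : ℝ) {n : ℕ} (γ : Fin n → ℝ) (jv : Fin (n - 1) → ℕ) : HN n →ₗ[ℂ] HN n :=
  (List.ofFn fun k : Fin (n - 1) => (ON q γ k) ^ (jv k)).prod

/-- The normalized creation operator in slot `i`: `h_m ↦ √(mᵢ + 1) h_{m + eᵢ}`. -/
def create {n : ℕ} (i : Fin n) : Module.End ℂ (HN n) :=
  Finsupp.lift (HN n) ℂ (Fin n → ℕ) fun m =>
    ((Real.sqrt (m i + 1) : ℝ) : ℂ) • hN (Function.update m i (m i + 1))

/-- The normalized annihilation operator in slot `i`: `h_m ↦ √mᵢ h_{m - eᵢ}`. The truncated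
subtraction at `mᵢ = 0` is harmless, the coefficient being zero. -/
def annih {n : ℕ} (i : Fin n) : Module.End ℂ (HN n) :=
  Finsupp.lift (HN n) ℂ (Fin n → ℕ) fun m =>
    ((Real.sqrt (m i) : ℝ) : ℂ) • hN (Function.update m i (m i - 1))

/-- The coefficient `Aᵢ` of the creation operator in slot `i` in `Δ^{(n)}a⁺`. -/
def wt (q : ℝ) {n : ℕ} (γ : Fin n → ℝ) (i : Fin n) : ℝ :=
  q ^ (-(∑ j ∈ Finset.Iio i, γ j) / 2) * q ^ ((∑ j ∈ Finset.Ioi i, γ j) / 2) *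
    Real.sqrt (qnum q (γ i))

lemma lift_hN {n : ℕ} (f : (Fin n → ℕ) → HN n) (m : Fin n → ℕ) :
    Finsupp.lift (HN n) ℂ (Fin n → ℕ) f (hN m) = f m := by
  simp [hN]

lemma end_ext {n : ℕ} {S T : Module.End ℂ (HN n)} (h : ∀ m, S (hN m) = T (hN m)) : S = T := by
  refine Finsupp.lhom_ext' fun m => LinearMap.ext_ring ?_
  simpa [hN] using h m

lemma create_hN {n : ℕ} (i : Fin n) (m : Fin n → ℕ) :
    create i (hN m) = ((Real.sqrt (m i + 1) : ℝ) : ℂ) • hN (Function.update m i (m i + 1)) :=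
  lift_hN _ _

lemma annih_hN {n : ℕ} (i : Fin n) (m : Fin n → ℕ) :
    annih i (hN m) = ((Real.sqrt (m i) : ℝ) : ℂ) • hN (Function.update m i (m i - 1)) :=
  lift_hN _ _

/-! ### Commutation relations -/

lemma create_comm {n : ℕ} (i j : Fin n) : Commute (create i) (create j) := by
  rcases eq_or_ne i j with rfl | hij
  · exact Commute.refl _
  refine end_ext fun m => ?_
  simp only [Module.End.mul_apply, create_hN, map_smul, Function.update_of_ne hij,
    Function.update_of_ne hij.symm, smul_smul]
  rw [Function.update_comm hij, mul_comm]

lemma annih_mul_create {n : ℕ} (i j : Fin n) :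
    annih i * create j = create j * annih i + (if i = j then 1 else 0 : ℂ) • 1 := by
  refine end_ext fun m => ?_
  rcases eq_or_ne i j with rfl | hij
  · simp only [Module.End.mul_apply, create_hN, annih_hN, map_smul, LinearMap.add_apply,
      smul_smul, Function.update_self, Function.update_idem, if_true, one_smul,
      Module.End.one_apply, Nat.add_sub_cancel, Function.update_eq_self]
    have h1 : ((Real.sqrt (m i + 1) : ℝ) : ℂ) * ((Real.sqrt ((m i + 1 : ℕ) : ℝ) : ℝ) : ℂ)
        = (m i : ℂ) + 1 := by
      push_cast
      rw [← Complex.ofReal_mul, Real.mul_self_sqrt (by positivity)]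
      push_cast; rfl
    rw [h1]
    rcases Nat.eq_zero_or_pos (m i) with h0 | h0
    · simp [h0]
    · have h2 : m i - 1 + 1 = m i := by omega
      have h3 : (((m i - 1 : ℕ) : ℝ) + 1) = (m i : ℝ) := by exact_mod_cast h2
      rw [h3, h2, Function.update_eq_self, ← Complex.ofReal_mul,
        Real.mul_self_sqrt (by positivity), add_smul, one_smul]
      simp
  · simp only [Module.End.mul_apply, create_hN, annih_hN, map_smul, smul_smul,
      Function.update_of_ne hij, Function.update_of_ne hij.symm, if_neg hij, zero_smul, add_zero]
    rw [Function.update_comm hij, mul_comm]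

lemma raise_eq (q : ℝ) {n : ℕ} (γ : Fin n → ℝ) :
    (ΔNaPlus q γ : Module.End ℂ (HN n)) = ∑ i, (wt q γ i : ℂ) • create i := by
  refine end_ext fun m => ?_
  simp only [ΔNaPlus, lift_hN, LinearMap.sum_apply, LinearMap.smul_apply, create_hN, smul_smul,
    ← Complex.ofReal_mul, wt]
  simp only [mul_assoc]

lemma lower_eq (q : ℝ) {n : ℕ} (γ : Fin n → ℝ) :
    (ΔNaMinus q γ : Module.End ℂ (HN n)) = ∑ i, (wt q γ i : ℂ) • annih i := by
  refine end_ext fun m => ?_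
  simp only [ΔNaMinus, lift_hN, LinearMap.sum_apply, LinearMap.smul_apply, annih_hN, smul_smul,
    ← Complex.ofReal_mul, wt]
  simp only [mul_assoc]

lemma qnum_pos {q : ℝ} (hq0 : 0 < q) (hq1 : q < 1) {γ : ℝ} (hγ : 0 < γ) : 0 < qnum q γ := by
  have h1 : q ^ γ < q ^ (-γ) := Real.rpow_lt_rpow_of_exponent_gt hq0 hq1 (by linarith)
  have h2 : 1 < q⁻¹ := (one_lt_inv₀ hq0).2 hq1
  exact div_pos_of_neg_of_neg (by linarith) (by linarith)

lemma wt_pos {q : ℝ} (hq0 : 0 < q) (hq1 : q < 1) {n : ℕ} {γ : Fin n → ℝ} (hγ : ∀ i, 0 < γ i)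
    (i : Fin n) : 0 < wt q γ i :=
  mul_pos (mul_pos (Real.rpow_pos_of_pos hq0 _) (Real.rpow_pos_of_pos hq0 _))
    (Real.sqrt_pos.2 (qnum_pos hq0 hq1 (hγ i)))

lemma ON_eq {q : ℝ} (hq0 : 0 < q) (hq1 : q < 1) {n : ℕ} {γ : Fin n → ℝ} (hγ : ∀ i, 0 < γ i)
    (k : Fin (n - 1)) :
    (ON q γ k : Module.End ℂ (HN n)) =
      ((q ^ (-(γ (pos1 k)) / 2) * Real.sqrt (qnum q (γ (pos2 k))) : ℝ) : ℂ) • create (pos1 k) +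
      (-((q ^ (γ (pos2 k) / 2) * Real.sqrt (qnum q (γ (pos1 k))) : ℝ) : ℂ)) • create (pos2 k) := by
  refine end_ext fun m => ?_
  have h1 := (Real.sqrt_pos.2 (qnum_pos hq0 hq1 (hγ (pos1 k)))).ne'
  have h2 := (Real.sqrt_pos.2 (qnum_pos hq0 hq1 (hγ (pos2 k)))).ne'
  simp only [ON, lift_hN, LinearMap.add_apply, LinearMap.smul_apply, create_hN, smul_smul,
    neg_mul, neg_smul, ← sub_eq_add_neg, ← Complex.ofReal_mul]
  congr 3 <;> field_simp

lemma lower_mul_create (q : ℝ) {n : ℕ} (γ : Fin n → ℝ) (j : Fin n) :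
    (ΔNaMinus q γ : Module.End ℂ (HN n)) * create j =
      create j * ΔNaMinus q γ + (wt q γ j : ℂ) • 1 := by
  simp only [lower_eq, Finset.sum_mul, Finset.mul_sum, smul_mul_assoc, mul_smul_comm,
    annih_mul_create, smul_add, Finset.sum_add_distrib, smul_smul]
  simp

/-! ### The coefficients -/

lemma sum_Iio_eq {n : ℕ} (γ : Fin n → ℝ) (i : Fin n) :
    ∑ j ∈ Finset.Iio i, γ j = ∑ j : Fin n with j.val < i.val, γ j := by
  congr 1; ext j; simp

lemma sum_lt_succ {n : ℕ} (γ : Fin n → ℝ) (i : Fin n) :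
    ∑ j : Fin n with j.val < i.val + 1, γ j = (∑ j : Fin n with j.val < i.val, γ j) + γ i := by
  have : (Finset.univ.filter fun j : Fin n => (j : ℕ) < i + 1) =
      insert i (Finset.univ.filter fun j : Fin n => (j : ℕ) < i) := by
    ext j; simp [Fin.ext_iff]; omega
  rw [this, Finset.sum_insert (by simp), add_comm]

lemma sum_Ioi_eq {n : ℕ} (γ : Fin n → ℝ) (i : Fin n) :
    ∑ j ∈ Finset.Ioi i, γ j = (∑ j, γ j) - ∑ j : Fin n with j.val < i.val + 1, γ j := by
  rw [eq_sub_iff_add_eq', ← Finset.sum_filter_add_sum_filter_not Finset.univ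
    (fun j : Fin n => (j : ℕ) < i + 1)]
  congr 2; ext j; simp

/-- The two coefficients of `O_k` are proportional to `A_{k+1}` and `A_k`; this is what makes
`O_k` commute with `Δ^{(n)}a⁻`. -/
lemma wt_balance {q : ℝ} (hq0 : 0 < q) {n : ℕ} (γ : Fin n → ℝ) (k : Fin (n - 1)) :
    q ^ (-(γ (pos1 k)) / 2) * Real.sqrt (qnum q (γ (pos2 k))) * wt q γ (pos1 k) =
      q ^ (γ (pos2 k) / 2) * Real.sqrt (qnum q (γ (pos1 k))) * wt q γ (pos2 k) := by
  have e1 := sum_lt_succ γ (pos1 k)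
  have e2 := sum_lt_succ γ (pos2 k)
  have hp : ((pos2 k : Fin n) : ℕ) = (pos1 k : Fin n) + 1 := rfl
  simp only [wt, sum_Iio_eq, sum_Ioi_eq, e2]
  rw [hp, e1]
  set s := ∑ j : Fin n with j.val < (pos1 k : Fin n).val, γ j
  set T := ∑ j, γ j
  have key : q ^ (-(γ (pos1 k)) / 2) * (q ^ (-s / 2) * q ^ ((T - (s + γ (pos1 k))) / 2)) =
      q ^ (γ (pos2 k) / 2) * (q ^ (-(s + γ (pos1 k)) / 2) *
        q ^ ((T - (s + γ (pos1 k) + γ (pos2 k))) / 2)) := by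
    simp only [← Real.rpow_add hq0]
    congr 1; ring
  linear_combination
    (Real.sqrt (qnum q (γ (pos2 k))) * Real.sqrt (qnum q (γ (pos1 k)))) * key

lemma sum_wt_sq {q : ℝ} (hq0 : 0 < q) (hq1 : q < 1) {n : ℕ} {γ : Fin n → ℝ}
    (hγ : ∀ i, 0 < γ i) : ∑ i, wt q γ i * wt q γ i = qnum q (∑ i, γ i) := by
  set T := ∑ j, γ j with hT
  -- the telescoping potential
  let G : ℕ → ℝ := fun k => q ^ (T - 2 * ∑ j : Fin n with j.val < k, γ j) / (q - q⁻¹)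
  have hterm : ∀ i : Fin n, wt q γ i * wt q γ i = G i - G (i + 1) := by
    intro i
    have hs := Real.mul_self_sqrt (qnum_pos hq0 hq1 (hγ i)).le
    simp only [G, wt, sum_Iio_eq, sum_Ioi_eq, sum_lt_succ, ← hT]
    set s := ∑ j : Fin n with j.val < i.val, γ j
    have e1 : q ^ (T - 2 * s) = (q ^ (-s / 2) * q ^ ((T - (s + γ i)) / 2)) ^ 2 * q ^ γ i := by
      rw [sq]; simp only [← Real.rpow_add hq0]; congr 1; ring
    have e2 : q ^ (T - 2 * (s + γ i)) =
        (q ^ (-s / 2) * q ^ ((T - (s + γ i)) / 2)) ^ 2 * q ^ (-γ i) := by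
      rw [sq]; simp only [← Real.rpow_add hq0]; congr 1; ring
    rw [e1, e2, mul_mul_mul_comm, hs, qnum]
    ring
  rw [Finset.sum_congr rfl fun i _ => hterm i,
    Fin.sum_univ_eq_sum_range (fun k => G k - G (k + 1)) n, Finset.sum_range_sub']
  have h0 : G 0 = q ^ T / (q - q⁻¹) := by simp [G]
  have hn : G n = q ^ (-T) / (q - q⁻¹) := by
    have : (∑ j : Fin n with j.val < n, γ j) = T := by simp [hT]
    simp only [G, this]
    congr 2; ring
  rw [h0, hn, qnum, sub_div]

lemma lower_mul_raise {q : ℝ} (hq0 : 0 < q) (hq1 : q < 1) {n : ℕ} {γ : Fin n → ℝ}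
    (hγ : ∀ i, 0 < γ i) :
    (ΔNaMinus q γ : Module.End ℂ (HN n)) * ΔNaPlus q γ =
      ΔNaPlus q γ * ΔNaMinus q γ + ((qnum q (∑ i, γ i) : ℝ) : ℂ) • 1 := by
  rw [raise_eq]
  simp only [Finset.mul_sum, Finset.sum_mul, mul_smul_comm, smul_mul_assoc, lower_mul_create,
    smul_add, Finset.sum_add_distrib, smul_smul, ← Finset.sum_smul]
  rw [← sum_wt_sq hq0 hq1 hγ]
  push_cast
  rfl

lemma lower_mul_ON {q : ℝ} (hq0 : 0 < q) (hq1 : q < 1) {n : ℕ} {γ : Fin n → ℝ}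
    (hγ : ∀ i, 0 < γ i) (k : Fin (n - 1)) :
    Commute (ΔNaMinus q γ : Module.End ℂ (HN n)) (ON q γ k) := by
  have hb := congrArg (fun x : ℝ => (x : ℂ)) (wt_balance hq0 γ k)
  rw [Complex.ofReal_mul, Complex.ofReal_mul _ (wt q γ (pos2 k))] at hb
  rw [ON_eq hq0 hq1 hγ, commute_iff_eq]
  simp only [mul_add, add_mul, mul_smul_comm, smul_mul_assoc, lower_mul_create, smul_add,
    smul_smul, neg_mul, hb]
  module

lemma create_comm_ON {q : ℝ} (hq0 : 0 < q) (hq1 : q < 1) {n : ℕ} {γ : Fin n → ℝ}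
    (hγ : ∀ i, 0 < γ i) (i : Fin n) (k : Fin (n - 1)) :
    Commute (create i) (ON q γ k : Module.End ℂ (HN n)) := by
  rw [ON_eq hq0 hq1 hγ]
  exact ((create_comm _ _).smul_right _).add_right ((create_comm _ _).smul_right _)

lemma ON_comm {q : ℝ} (hq0 : 0 < q) (hq1 : q < 1) {n : ℕ} {γ : Fin n → ℝ}
    (hγ : ∀ i, 0 < γ i) (k l : Fin (n - 1)) :
    Commute (ON q γ k : Module.End ℂ (HN n)) (ON q γ l) := by
  rw [ON_eq hq0 hq1 hγ k]
  exact ((create_comm_ON hq0 hq1 hγ _ _).smul_left _).add_left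
    ((create_comm_ON hq0 hq1 hγ _ _).smul_left _)

lemma raise_comm_ON {q : ℝ} (hq0 : 0 < q) (hq1 : q < 1) {n : ℕ} {γ : Fin n → ℝ}
    (hγ : ∀ i, 0 < γ i) (k : Fin (n - 1)) :
    Commute (ΔNaPlus q γ : Module.End ℂ (HN n)) (ON q γ k) := by
  rw [raise_eq]
  exact Commute.sum_left _ _ _ fun i _ => (create_comm_ON hq0 hq1 hγ _ _).smul_left _

/-- Every creation operator is a linear combination of `Δ^{(n)}a⁺` and the `O_k`. -/
lemma create_mem_span {q : ℝ} (hq0 : 0 < q) (hq1 : q < 1) {n : ℕ} {γ : Fin n → ℝ}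
    (hγ : ∀ i, 0 < γ i) (i : Fin n) :
    create i ∈ Submodule.span ℂ
      (insert (ΔNaPlus q γ) (Set.range (ON q γ)) : Set (Module.End ℂ (HN n))) := by
  set V := Submodule.span ℂ
    (insert (ΔNaPlus q γ) (Set.range (ON q γ)) : Set (Module.End ℂ (HN n))) with hV
  have hn : 0 < n := i.pos
  have step : ∀ v (hv : v < n), ∃ t : ℝ, 0 < t ∧
      create (⟨v, hv⟩ : Fin n) + (-t : ℂ) • create ⟨0, hn⟩ ∈ V := by
    intro v
    induction v with
    | zero =>
      refine fun hv => ⟨1, one_pos, ?_⟩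
      convert V.zero_mem using 1
      push_cast
      module
    | succ v ih =>
      intro hv
      obtain ⟨t, ht, hmem⟩ := ih (by omega)
      let k : Fin (n - 1) := ⟨v, by omega⟩
      have hO : (ON q γ k : Module.End ℂ (HN n)) ∈ V :=
        Submodule.subset_span (Set.mem_insert_of_mem _ ⟨k, rfl⟩)
      rw [ON_eq hq0 hq1 hγ] at hO
      have ha : 0 < q ^ (-(γ (pos1 k)) / 2) * Real.sqrt (qnum q (γ (pos2 k))) :=
        mul_pos (Real.rpow_pos_of_pos hq0 _) (Real.sqrt_pos.2 (qnum_pos hq0 hq1 (hγ _)))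
      have hb : 0 < q ^ (γ (pos2 k) / 2) * Real.sqrt (qnum q (γ (pos1 k))) :=
        mul_pos (Real.rpow_pos_of_pos hq0 _) (Real.sqrt_pos.2 (qnum_pos hq0 hq1 (hγ _)))
      generalize q ^ (-(γ (pos1 k)) / 2) * Real.sqrt (qnum q (γ (pos2 k))) = a at hO ha
      generalize q ^ (γ (pos2 k) / 2) * Real.sqrt (qnum q (γ (pos1 k))) = b at hO hb
      change (a : ℂ) • create (⟨v, by omega⟩ : Fin n) +
        (-b : ℂ) • create (⟨v + 1, hv⟩ : Fin n) ∈ V at hO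
      refine ⟨a / b * t, by positivity, ?_⟩
      have hb' : (b : ℂ) ≠ 0 := by exact_mod_cast hb.ne'
      have := V.add_mem (V.smul_mem ((a : ℂ) / b) hmem) (V.smul_mem (-(b : ℂ)⁻¹) hO)
      convert this using 1
      push_cast
      have e1 : (-(b : ℂ)⁻¹ * -b) = 1 := by rw [neg_mul_neg, inv_mul_cancel₀ hb']
      have e2 : (-(b : ℂ)⁻¹ * a) = -(a / b) := by ring
      simp only [smul_add, smul_smul, e1, e2, one_smul]
      module
  choose t ht hmem using step
  have hℓ : (ΔNaPlus q γ : Module.End ℂ (HN n)) ∈ V :=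
    Submodule.subset_span (Set.mem_insert _ _)
  have hs : 0 < ∑ j : Fin n, wt q γ j * t j j.2 :=
    Finset.sum_pos (fun j _ => mul_pos (wt_pos hq0 hq1 hγ j) (ht _ _)) ⟨i, Finset.mem_univ _⟩
  have h0 : create (⟨0, hn⟩ : Fin n) ∈ V := by
    have h1 : ((∑ j : Fin n, wt q γ j * t j j.2 : ℝ) : ℂ) • create (⟨0, hn⟩ : Fin n) ∈ V := by
      have h2 := V.add_mem hℓ (V.sum_mem fun (j : Fin n) (_ : j ∈ Finset.univ) =>
        V.smul_mem (-wt q γ j : ℂ) (hmem j j.2))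
      convert h2 using 1
      rw [raise_eq, ← Finset.sum_add_distrib]
      push_cast
      rw [Finset.sum_smul]
      refine Finset.sum_congr rfl fun j _ => ?_
      module
    refine (V.smul_mem_iff ?_).1 h1
    exact_mod_cast hs.ne'
  have := V.add_mem (hmem i i.2) (V.smul_mem (t i i.2 : ℂ) h0)
  convert this using 1
  module

/-! ### Degrees and monomials -/

/-- The span of the `h_{m₁} ⊗ ⋯ ⊗ h_{m_n}` of total degree `N`. -/
def degSpace (n N : ℕ) : Submodule ℂ (HN n) :=
  Submodule.span ℂ {x : HN n | ∃ m : Fin n → ℕ, ∑ i, m i = N ∧ x = hN m}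

/-- The operators raising the total degree by `d`. -/
def raisers (n d : ℕ) : Submodule ℂ (Module.End ℂ (HN n)) where
  carrier := {T | ∀ N, ∀ v ∈ degSpace n N, T v ∈ degSpace n (N + d)}
  add_mem' hS hT N v hv := Submodule.add_mem _ (hS N v hv) (hT N v hv)
  zero_mem' _ _ _ := Submodule.zero_mem _
  smul_mem' a _ hT N v hv := Submodule.smul_mem _ a (hT N v hv)

lemma sum_update_succ {n : ℕ} (m : Fin n → ℕ) (i : Fin n) :
    ∑ j, Function.update m i (m i + 1) j = (∑ j, m j) + 1 := by
  rw [Finset.sum_update_of_mem (Finset.mem_univ i),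
    ← Finset.add_sum_erase _ m (Finset.mem_univ i), Finset.sdiff_singleton_eq_erase]
  ring

lemma create_mem_raisers {n : ℕ} (i : Fin n) : create i ∈ raisers n 1 := by
  intro N v hv
  induction hv using Submodule.span_induction with
  | mem x hx =>
    obtain ⟨m, hm, rfl⟩ := hx
    rw [create_hN]
    refine Submodule.smul_mem _ _ (Submodule.subset_span ⟨_, ?_, rfl⟩)
    rw [sum_update_succ, hm]
  | zero => simp
  | add x y _ _ hx hy => rw [map_add]; exact Submodule.add_mem _ hx hy
  | smul a x _ hx => rw [map_smul]; exact Submodule.smul_mem _ _ hx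

lemma mul_mem_raisers {n d e : ℕ} {S T : Module.End ℂ (HN n)} (hS : S ∈ raisers n d)
    (hT : T ∈ raisers n e) : S * T ∈ raisers n (d + e) := fun N v hv => by
  have := hS _ _ (hT N v hv)
  rwa [add_assoc, add_comm e d] at this

lemma one_mem_raisers {n : ℕ} : (1 : Module.End ℂ (HN n)) ∈ raisers n 0 := fun _ _ hv => hv

lemma pow_mem_raisers {n : ℕ} {T : Module.End ℂ (HN n)} (hT : T ∈ raisers n 1) (e : ℕ) :
    T ^ e ∈ raisers n e := by
  induction e with
  | zero => exact one_mem_raisers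
  | succ e ih => rw [pow_succ]; exact mul_mem_raisers ih hT

lemma ofFn_prod_mem_raisers {n m : ℕ} (f : Fin m → Module.End ℂ (HN n))
    (hf : ∀ k, f k ∈ raisers n 1) (e : Fin m → ℕ) :
    (List.ofFn fun k => f k ^ e k).prod ∈ raisers n (∑ k, e k) := by
  induction m with
  | zero => simpa using one_mem_raisers
  | succ m ih =>
    rw [List.ofFn_succ, List.prod_cons, Fin.sum_univ_succ]
    exact mul_mem_raisers (pow_mem_raisers (hf 0) _) (ih _ (fun k => hf k.succ) _)

/-- For a commuting family, multiplying an ordered monomial by one of the factors raises the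
corresponding exponent. -/
lemma mul_ofFn_prod {M : Type*} [Monoid M] {m : ℕ} (f : Fin m → M)
    (hf : ∀ k l, Commute (f k) (f l)) (e : Fin m → ℕ) (k : Fin m) :
    f k * (List.ofFn fun l => f l ^ e l).prod =
      (List.ofFn fun l => f l ^ Function.update e k (e k + 1) l).prod := by
  induction m with
  | zero => exact k.elim0
  | succ m ih =>
    simp only [List.ofFn_succ, List.prod_cons]
    refine Fin.cases ?_ (fun k => ?_) k
    · simp [← mul_assoc, pow_succ']
    · have h := ih (fun l => f l.succ) (fun _ _ => hf _ _) (fun l => e l.succ) k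
      rw [← mul_assoc, ((hf k.succ 0).pow_right (e 0)).eq, mul_assoc, h,
        Function.update_of_ne (Fin.succ_ne_zero _).symm]
      congr 3
      funext l
      rcases eq_or_ne l k with rfl | hl
      · simp
      · rw [Function.update_of_ne hl, Function.update_of_ne (by simpa using hl)]

/-- Any operator commuting with all `O_k` commutes with the monomials in them. -/
lemma comm_Omono {q : ℝ} {n : ℕ} {γ : Fin n → ℝ} {T : Module.End ℂ (HN n)}
    (hT : ∀ k, Commute T (ON q γ k : Module.End ℂ (HN n))) (jv : Fin (n - 1) → ℕ) :
    Commute T (Omono q γ jv : Module.End ℂ (HN n)) := by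
  refine Commute.list_prod_right _ _ fun x hx => ?_
  obtain ⟨k, rfl⟩ := (List.mem_ofFn' _ _).1 hx
  exact (hT k).pow_right _

lemma raise_mem_raisers (q : ℝ) {n : ℕ} (γ : Fin n → ℝ) : ΔNaPlus q γ ∈ raisers n 1 := by
  rw [raise_eq]
  exact Submodule.sum_mem _ fun i _ => Submodule.smul_mem _ _ (create_mem_raisers i)

lemma ON_mem_raisers {q : ℝ} (hq0 : 0 < q) (hq1 : q < 1) {n : ℕ} {γ : Fin n → ℝ}
    (hγ : ∀ i, 0 < γ i) (k : Fin (n - 1)) : ON q γ k ∈ raisers n 1 := by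
  rw [ON_eq hq0 hq1 hγ]
  exact Submodule.add_mem _ (Submodule.smul_mem _ _ (create_mem_raisers _))
    (Submodule.smul_mem _ _ (create_mem_raisers _))

/-- The vectors `(Δ^{(n)}a⁺)^{N-j} O^{jv} v₀` with `|jv| = j`. -/
def ladder (q : ℝ) {n : ℕ} (γ : Fin n → ℝ) (N j : ℕ) : Set (HN n) :=
  {x : HN n | ∃ jv : Fin (n - 1) → ℕ, ∑ k, jv k = j ∧
    x = ((ΔNaPlus q γ) ^ (N - j)) (Omono q γ jv (hN fun _ => 0))}

lemma ladder_subset {q : ℝ} (hq0 : 0 < q) (hq1 : q < 1) {n : ℕ} {γ : Fin n → ℝ}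
    (hγ : ∀ i, 0 < γ i) {N j : ℕ} (hj : j ≤ N) : ladder q γ N j ⊆ degSpace n N := by
  rintro _ ⟨jv, hjv, rfl⟩
  have h0 : (hN fun _ => 0 : HN n) ∈ degSpace n 0 := Submodule.subset_span ⟨_, by simp, rfl⟩
  have h1 := ofFn_prod_mem_raisers _ (ON_mem_raisers hq0 hq1 hγ) jv _ _ h0
  have h2 := pow_mem_raisers (raise_mem_raisers q γ) (N - j) _ _ h1
  have e : 0 + ∑ k, jv k + (N - j) = N := by omega
  rw [e] at h2
  exact h2

/-- The ladder vectors of total degree `N` span the whole degree `N` space. -/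
lemma degSpace_le {q : ℝ} (hq0 : 0 < q) (hq1 : q < 1) {n : ℕ} {γ : Fin n → ℝ}
    (hγ : ∀ i, 0 < γ i) (N : ℕ) :
    degSpace n N ≤ Submodule.span ℂ (⋃ j : Fin (N + 1), ladder q γ N j) := by
  induction N with
  | zero =>
    refine Submodule.span_le.2 ?_
    rintro _ ⟨m, hm, rfl⟩
    refine Submodule.subset_span (Set.mem_iUnion.2 ⟨0, fun _ => 0, by simp, ?_⟩)
    have : m = fun _ => 0 := by
      funext i
      exact Finset.sum_eq_zero_iff.1 hm i (Finset.mem_univ i)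
    simp [this, Omono]
  | succ N ih =>
    set Y := Submodule.span ℂ (⋃ j : Fin (N + 1 + 1), ladder q γ (N + 1) j) with hY
    -- `ℓ` and all `O_k`, hence all their combinations, map degree `N` ladder vectors into `Y`
    have hmap : ∀ T ∈ Submodule.span ℂ
        (insert (ΔNaPlus q γ) (Set.range (ON q γ)) : Set (Module.End ℂ (HN n))),
        ∀ v ∈ degSpace n N, T v ∈ Y := by
      intro T hT v hv
      induction hT using Submodule.span_induction with
      | zero => simp
      | add S T _ _ hS hT => exact Y.add_mem hS hT
      | smul a T _ hT => exact Y.smul_mem a hT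
      | mem T hT =>
        suffices h : Submodule.span ℂ (⋃ j : Fin (N + 1), ladder q γ N j) ≤ Y.comap T from
          h (ih hv)
        refine Submodule.span_le.2 (Set.iUnion_subset fun j => ?_)
        rintro _ ⟨jv, hjv, rfl⟩
        have hj := j.2
        refine Submodule.subset_span (Set.mem_iUnion.2 ?_)
        rcases hT with rfl | ⟨k, rfl⟩
        · refine ⟨j.castSucc, jv, hjv, ?_⟩
          have e : N + 1 - (j.castSucc : ℕ) = (N - j) + 1 := by
            rw [Fin.val_castSucc]; omega
          rw [e, pow_succ']
          rfl
        · refine ⟨j.succ, Function.update jv k (jv k + 1), ?_, ?_⟩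
          · rw [sum_update_succ, hjv]; simp
          · have e : N + 1 - (j.succ : ℕ) = N - j := by
              rw [Fin.val_succ]; omega
            rw [e]
            have h1 := (((raise_comm_ON hq0 hq1 hγ k).pow_left (N - j)).eq).symm
            have h2 := mul_ofFn_prod (fun k => (ON q γ k : Module.End ℂ (HN n)))
              (ON_comm hq0 hq1 hγ) jv k
            rw [← Module.End.mul_apply, h1, Module.End.mul_apply, ← Module.End.mul_apply (ON q γ k)]
            exact congrArg (fun S : Module.End ℂ (HN n) =>
              ((ΔNaPlus q γ) ^ (N - (j : ℕ))) (S (hN fun _ => 0))) h2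
    refine Submodule.span_le.2 ?_
    rintro _ ⟨m, hm, rfl⟩
    obtain ⟨i, hi⟩ : ∃ i, m i ≠ 0 := by
      by_contra! h
      simp [h] at hm
    have h1 : m i - 1 + 1 = m i := by omega
    have hup : Function.update (Function.update m i (m i - 1)) i (m i - 1 + 1) = m := by
      rw [h1, Function.update_idem, Function.update_eq_self]
    have hsum := sum_update_succ (Function.update m i (m i - 1)) i
    rw [Function.update_self, hup, hm] at hsum
    have h2 := hmap _ (create_mem_span hq0 hq1 hγ i) (hN (Function.update m i (m i - 1)))
      (Submodule.subset_span ⟨_, by omega, rfl⟩)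
    rw [create_hN, Function.update_self, hup] at h2
    refine (Y.smul_mem_iff ?_).1 h2
    have : 0 < Real.sqrt (((m i - 1 : ℕ) : ℝ) + 1) := Real.sqrt_pos.2 (by positivity)
    exact_mod_cast this.ne'

/-! ### Eigenvalues -/

lemma eps_apply {n N : ℕ} (c : Fin n → ℝ) {v : HN n} (hv : v ∈ degSpace n N) :
    ΔNeps c v = (((∑ i, c i) + N : ℝ) : ℂ) • v := by
  induction hv using Submodule.span_induction with
  | mem x hx =>
    obtain ⟨m, rfl, rfl⟩ := hx
    rw [ΔNeps, lift_hN, Finset.sum_add_distrib, add_comm]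
    push_cast
    rfl
  | zero => simp
  | add x y _ _ hx hy => rw [map_add, hx, hy, smul_add]
  | smul a x _ hx => rw [map_smul, hx, smul_comm]

lemma lower_Omono {q : ℝ} (hq0 : 0 < q) (hq1 : q < 1) {n : ℕ} {γ : Fin n → ℝ}
    (hγ : ∀ i, 0 < γ i) (jv : Fin (n - 1) → ℕ) :
    ΔNaMinus q γ (Omono q γ jv (hN fun _ => 0)) = 0 := by
  have h := (comm_Omono (lower_mul_ON hq0 hq1 hγ) jv).eq
  have h0 : ΔNaMinus q γ (hN fun _ => 0 : HN n) = 0 := by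
    rw [ΔNaMinus, lift_hN]
    simp
  rw [← Module.End.mul_apply, h, Module.End.mul_apply, h0, map_zero]

/-- On the `r`-th raising of a vector killed by `D`, the number-type operator `ℓ D` acts by
`[Σ γᵢ]_q r`. -/
lemma raise_lower_pow {q : ℝ} (hq0 : 0 < q) (hq1 : q < 1) {n : ℕ} {γ : Fin n → ℝ}
    (hγ : ∀ i, 0 < γ i) {w : HN n} (hw : ΔNaMinus q γ w = 0) (r : ℕ) :
    ΔNaPlus q γ (ΔNaMinus q γ (((ΔNaPlus q γ) ^ r) w)) =
      ((qnum q (∑ i, γ i) * r : ℝ) : ℂ) • ((ΔNaPlus q γ) ^ r) w := by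
  induction r with
  | zero => simp [hw]
  | succ r ih =>
    have h := LinearMap.congr_fun (lower_mul_raise hq0 hq1 hγ) (((ΔNaPlus q γ) ^ r) w)
    simp only [Module.End.mul_apply, LinearMap.add_apply, LinearMap.smul_apply,
      Module.End.one_apply] at h
    rw [pow_succ', Module.End.mul_apply, h, ih, ← add_smul, map_smul]
    congr 1
    push_cast
    ring

/-- the weight space `W^{(N)} = span{h_{m₁} ⊗ ⋯ ⊗ h_{m_n} : Σ mᵢ = N}` is the
internal direct sum of the subspaces
`U^{(j,N)} = span{(Δ^{(n)}a⁺)^{N−j} O₁^{j₁}⋯O_{n−1}^{j_{n−1}} v₀ : Σ jᵢ = j}`, `0 ≤ j ≤ N`;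
every vector of `U^{(j,N)}` is an eigenvector of `Δ^{(n)}ε` with eigenvalue `Σcᵢ + N` and of
the Casimir `Δ^{(n)}C_q = [Σγᵢ]_q · Δ^{(n)}ε − Δ^{(n)}a⁺ ∘ Δ^{(n)}a⁻` with eigenvalue
`[Σγᵢ]_q (Σcᵢ + j)`. -/
theorem stmt11 (n N : ℕ) (hn : 2 ≤ n) (q : ℝ) (γ c : Fin n → ℝ)
    (hq0 : 0 < q) (hq1 : q < 1) (hγ : ∀ i, 0 < γ i) :
    ∀ (W : Submodule ℂ (HN n)) (U : Fin (N + 1) → Submodule ℂ (HN n)),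
      W = Submodule.span ℂ {x : HN n | ∃ m : Fin n → ℕ, ∑ i, m i = N ∧ x = hN m} →
      (∀ j : Fin (N + 1),
        U j = Submodule.span ℂ
          {x : HN n | ∃ jv : Fin (n - 1) → ℕ, ∑ k, jv k = (j : ℕ) ∧
            x = ((ΔNaPlus q γ) ^ (N - (j : ℕ))) (Omono q γ jv (hN fun _ => 0))}) →
      iSupIndep U ∧ (⨆ j, U j) = W ∧
      ∀ j : Fin (N + 1), ∀ v ∈ U j,
        ΔNeps c v = (((∑ i, c i) + N : ℝ) : ℂ) • v ∧
        (((qnum q (∑ i, γ i) : ℝ) : ℂ) • ΔNeps c - ΔNaPlus q γ ∘ₗ ΔNaMinus q γ) v =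
          ((qnum q (∑ i, γ i) * ((∑ i, c i) + (j : ℕ)) : ℝ) : ℂ) • v := by
  rintro W U rfl hU
  have hU' : ∀ j, U j = Submodule.span ℂ (ladder q γ N j) := hU
  have hUW : ∀ j, U j ≤ degSpace n N := fun j => by
    rw [hU' j]
    exact Submodule.span_le.2 (ladder_subset hq0 hq1 hγ (Nat.lt_succ_iff.1 j.2))
  have hcas : ∀ j : Fin (N + 1), ∀ v ∈ U j,
      (((qnum q (∑ i, γ i) : ℝ) : ℂ) • ΔNeps c - ΔNaPlus q γ ∘ₗ ΔNaMinus q γ) v =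
        ((qnum q (∑ i, γ i) * ((∑ i, c i) + (j : ℕ)) : ℝ) : ℂ) • v := by
    intro j v hv
    have heps := eps_apply c (hUW j hv)
    have hnum : ΔNaPlus q γ (ΔNaMinus q γ v) =
        ((qnum q (∑ i, γ i) * ((N - (j : ℕ) : ℕ) : ℝ) : ℝ) : ℂ) • v := by
      rw [hU' j] at hv
      clear heps
      induction hv using Submodule.span_induction with
      | mem x hx =>
        obtain ⟨jv, -, rfl⟩ := hx
        exact raise_lower_pow hq0 hq1 hγ (lower_Omono hq0 hq1 hγ jv) _
      | zero => simp
      | add x y _ _ hx hy => rw [map_add, map_add, hx, hy, smul_add]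
      | smul a x _ hx => rw [map_smul, map_smul, hx, smul_comm]
    rw [LinearMap.sub_apply, LinearMap.smul_apply, LinearMap.comp_apply, heps, hnum, smul_smul,
      ← sub_smul, Nat.cast_sub (Nat.lt_succ_iff.1 j.2)]
    congr 1
    push_cast
    ring
  refine ⟨?_, le_antisymm (iSup_le hUW) ?_, fun j v hv => ⟨eps_apply c (hUW j hv), hcas j v hv⟩⟩
  · have hT : 0 < qnum q (∑ i, γ i) :=
      qnum_pos hq0 hq1 (Finset.sum_pos (fun i _ => hγ i) ⟨⟨0, by omega⟩, Finset.mem_univ _⟩)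
    have hinj : Function.Injective fun j : Fin (N + 1) =>
        ((qnum q (∑ i, γ i) * ((∑ i, c i) + (j : ℕ)) : ℝ) : ℂ) := by
      intro j k h
      have h' := mul_left_cancel₀ hT.ne' (Complex.ofReal_injective h)
      exact Fin.ext (by exact_mod_cast add_left_cancel h')
    refine ((Module.End.eigenspaces_iSupIndep
      (((qnum q (∑ i, γ i) : ℝ) : ℂ) • ΔNeps c - ΔNaPlus q γ ∘ₗ ΔNaMinus q γ)).comp hinj).mono
      fun j v hv => ?_
    exact Module.End.mem_eigenspace_iff.2 (hcas j v hv)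
  · refine (degSpace_le hq0 hq1 hγ N).trans ?_
    rw [Submodule.span_iUnion]
    exact iSup_mono fun j => (hU' j).ge
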